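/- Let n ≥ 1 be an integer and let p be a real number with 1 < p ≤ 1 + 2/n. Then there is no function u : ℝⁿ × [0,∞) → ℝ such that u is continuous on ℝⁿ × [0,∞), twice continuously differentiable in x and once in t on ℝⁿ × (0,∞), u ≥ 0 everywhere, u satisfies Δu − ∂ₜu + u^p = 0 on ℝⁿ × (0,∞), and the initial value u₀(x) := u(x,0) is nonnegative and not identically zero. (This is the Euclidean specialization of part (a) of the main theorem: on ℝⁿ the volume of balls is V(r) = ωₙrⁿ, and ∫^∞ t/V(t)^{p−1} dt = ∞ holds exactly when p ≤ 1 + 2/n.) -/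

import Mathlib

open MeasureTheory Real Set

/-- The Laplacian of `f : ℝⁿ → ℝ` at `x`, defined as the trace of the second derivative. -/
noncomputable def laplacian {n : ℕ} (f : EuclideanSpace ℝ (Fin n) → ℝ)
    (x : EuclideanSpace ℝ (Fin n)) : ℝ :=
  ∑ i : Fin n, iteratedFDeriv ℝ 2 f x ![EuclideanSpace.single i 1, EuclideanSpace.single i 1]

theorem second_deriv_nonneg_of_forall_ge {f f' : ℝ → ℝ} {c a : ℝ}
    (hf : ∀ x, HasDerivAt f (f' x) x) (hf' : HasDerivAt f' c a) (hmin : ∀ x, f a ≤ f x) :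
    0 ≤ c := by
  by_contra! hc
  have hd : deriv f = f' := funext fun x => (hf x).deriv
  have hloc : IsLocalMin f a := Filter.Eventually.of_forall hmin
  have hmax : IsLocalMax f a := by
    refine isLocalMax_of_deriv_deriv_neg ?_ hloc.deriv_eq_zero (hf a).continuousAt
    rwa [hd, hf'.deriv]
  have hconst : f =ᶠ[nhds a] fun _ => f a := by
    filter_upwards [hmax] with x hx
    exact le_antisymm hx (hmin x)
  have h1 : f' =ᶠ[nhds a] fun _ => 0 := by
    rw [← hd]
    simpa using hconst.deriv
  have h2 : HasDerivAt f' 0 a := (hasDerivAt_const a (0 : ℝ)).congr_of_eventuallyEq h1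
  linarith [hf'.unique h2]

theorem deriv_nonpos_of_nonneg_left {v : ℝ → ℝ} {a c d : ℝ} (hac : a < c)
    (hv : HasDerivAt v d c) (hc : v c = 0) (hpos : ∀ t ∈ Ico a c, 0 ≤ v t) : d ≤ 0 := by
  have h := (hasDerivWithinAt_iff_tendsto_slope' (s := Iio c) (by simp)).1 hv.hasDerivWithinAt
  refine le_of_tendsto h ?_
  filter_upwards [Ioo_mem_nhdsLT hac] with t ht
  rw [slope_def_field, hc, sub_zero]
  exact div_nonpos_of_nonneg_of_nonpos (hpos t ⟨ht.1.le, ht.2⟩) (by linarith [ht.2])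

theorem ContDiff.hasDerivAt_lineDeriv {E : Type*} [NormedAddCommGroup E] [NormedSpace ℝ E]
    {f : E → ℝ} (hf : ContDiff ℝ 2 f) (x v : E) :
    (∀ τ : ℝ, HasDerivAt (fun τ : ℝ => f (x + τ • v)) (fderiv ℝ f (x + τ • v) v) τ) ∧
    HasDerivAt (fun τ : ℝ => fderiv ℝ f (x + τ • v) v) (iteratedFDeriv ℝ 2 f x ![v, v]) 0 := by
  have hline : ∀ τ : ℝ, HasDerivAt (fun τ : ℝ => x + τ • v) v τ := fun τ => by
    simpa using ((hasDerivAt_id τ).smul_const v).const_add x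
  refine ⟨fun τ => ?_, ?_⟩
  · exact ((hf.differentiable (by norm_num)) _).hasFDerivAt.comp_hasDerivAt τ (hline τ)
  · have h1 : Differentiable ℝ (fderiv ℝ f) :=
      (hf.fderiv_right (m := 1) (by norm_num)).differentiable (by norm_num)
    have h2 := (h1 (x + (0 : ℝ) • v)).hasFDerivAt.comp_hasDerivAt (0 : ℝ) (hline 0)
    have h3 := h2.clm_apply (hasDerivAt_const (0 : ℝ) v)
    rw [iteratedFDeriv_two_apply]
    simpa using h3

theorem laplacian_ge_of_radial_touching {n : ℕ} {f : EuclideanSpace ℝ (Fin n) → ℝ}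
    (hf : ContDiff ℝ 2 f) {g g1 g2 : ℝ → ℝ} (hg : ∀ s, HasDerivAt g (g1 s) s)
    (hg1 : ∀ s, HasDerivAt g1 (g2 s) s) {x₀ x : EuclideanSpace ℝ (Fin n)}
    (hle : ∀ y, g (‖y - x₀‖ ^ 2) ≤ f y) (heq : f x = g (‖x - x₀‖ ^ 2)) :
    4 * ‖x - x₀‖ ^ 2 * g2 (‖x - x₀‖ ^ 2) + 2 * n * g1 (‖x - x₀‖ ^ 2) ≤ laplacian f x := by
  set S := ‖x - x₀‖ ^ 2 with hS
  have key : ∀ i : Fin n, 4 * (x i - x₀ i) ^ 2 * g2 S + 2 * g1 S ≤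
      iteratedFDeriv ℝ 2 f x ![EuclideanSpace.single i 1, EuclideanSpace.single i 1] := by
    intro i
    set e : EuclideanSpace ℝ (Fin n) := EuclideanSpace.single i 1 with he
    obtain ⟨h1, h2⟩ := hf.hasDerivAt_lineDeriv x e
    set z := x i - x₀ i with hz
    have hnorm : ∀ τ : ℝ, ‖x + τ • e - x₀‖ ^ 2 = S + 2 * τ * z + τ ^ 2 := by
      intro τ
      have : x + τ • e - x₀ = (x - x₀) + τ • e := by abel
      rw [this, norm_add_sq_real, inner_smul_right, he, EuclideanSpace.inner_single_right,
        norm_smul]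
      simp [hS, hz]
      ring
    have hq : ∀ τ : ℝ, HasDerivAt (fun τ : ℝ => S + 2 * τ * z + τ ^ 2) (2 * z + 2 * τ) τ := by
      intro τ
      exact (((((hasDerivAt_id τ).const_mul 2).mul_const z).const_add S).add
        ((hasDerivAt_id τ).pow 2)).congr_deriv (by simp)
    have hG : ∀ τ : ℝ, HasDerivAt (fun τ : ℝ => g (S + 2 * τ * z + τ ^ 2))
        (g1 (S + 2 * τ * z + τ ^ 2) * (2 * z + 2 * τ)) τ := fun τ => (hg _).comp τ (hq τ)
    have hG1 : HasDerivAt (fun τ : ℝ => g1 (S + 2 * τ * z + τ ^ 2) * (2 * z + 2 * τ))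
        (4 * z ^ 2 * g2 S + 2 * g1 S) 0 := by
      have h3 := (hg1 _).comp (0 : ℝ) (hq 0)
      refine (h3.mul (((hasDerivAt_id (0 : ℝ)).const_mul 2).const_add (2 * z))).congr_deriv ?_
      simp
      ring
    have := second_deriv_nonneg_of_forall_ge (fun τ => (h1 τ).sub (hG τ)) (h2.sub hG1) (by
      intro τ
      have h5 := hle (x + τ • e)
      rw [hnorm] at h5
      simp only [Pi.sub_apply, zero_smul, add_zero, mul_zero, zero_mul]
      rw [heq]
      norm_num
      exact h5)
    linarith
  have hsum := Finset.sum_le_sum fun i (_ : i ∈ Finset.univ) => key i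
  have hSsum : ∑ i, (x i - x₀ i) ^ 2 = S := by
    rw [hS, EuclideanSpace.norm_sq_eq]
    simp
  rw [Finset.sum_add_distrib, ← Finset.sum_mul, ← Finset.mul_sum, hSsum] at hsum
  simp only [Finset.sum_const, Finset.card_univ, Fintype.card_fin, nsmul_eq_mul] at hsum
  unfold laplacian
  linarith

/-- `u` is a nonnegative classical solution of `Δu - ∂ₜu + u^p = 0` on `ℝⁿ × (0,∞)`, continuous
up to time `0`. -/
structure IsNonnegSolution (n : ℕ) (p : ℝ) (u : EuclideanSpace ℝ (Fin n) → ℝ → ℝ) : Prop where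
  continuousOn : ContinuousOn (fun q : EuclideanSpace ℝ (Fin n) × ℝ => u q.1 q.2) {q | 0 ≤ q.2}
  contDiff_space : ∀ t : ℝ, 0 < t → ContDiff ℝ 2 (fun x => u x t)
  contDiffOn_time : ∀ x : EuclideanSpace ℝ (Fin n), ContDiffOn ℝ 1 (u x) (Set.Ioi (0 : ℝ))
  nonneg : ∀ x : EuclideanSpace ℝ (Fin n), ∀ t : ℝ, 0 ≤ t → 0 ≤ u x t
  equation : ∀ x : EuclideanSpace ℝ (Fin n), ∀ t : ℝ, 0 < t →
    laplacian (fun y => u y t) x - deriv (u x) t + u x t ^ p = 0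

/-- A strict radial subsolution lying below a nonnegative solution at the initial time stays
below it. -/
theorem IsNonnegSolution.radial_subsolution_lt {n : ℕ} {p : ℝ} {u : EuclideanSpace ℝ (Fin n) → ℝ → ℝ}
    (hu : IsNonnegSolution n p u)
    {a b R : ℝ} (ha : 0 < a) (x₀ : EuclideanSpace ℝ (Fin n)) {G G1 G2 Gt : ℝ → ℝ → ℝ}
    (hGc : ContinuousOn (fun q : ℝ × ℝ => G q.1 q.2) (Icc a b ×ˢ univ))
    (hG1 : ∀ t ∈ Icc a b, ∀ s, HasDerivAt (G t) (G1 t s) s)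
    (hG2 : ∀ t ∈ Icc a b, ∀ s, HasDerivAt (G1 t) (G2 t s) s)
    (hGt : ∀ t ∈ Icc a b, ∀ s, HasDerivAt (fun t => G t s) (Gt t s) t)
    (hR : ∀ t ∈ Icc a b, ∀ s, 0 ≤ s → 0 ≤ G t s → s ≤ R)
    (hsub : ∀ t ∈ Icc a b, ∀ s, 0 ≤ s → 0 ≤ G t s →
      Gt t s < 4 * s * G2 t s + 2 * n * G1 t s + G t s ^ p)
    (hinit : ∀ x, G a (‖x - x₀‖ ^ 2) < u x a) :
    ∀ t ∈ Icc a b, ∀ x, G t (‖x - x₀‖ ^ 2) < u x t := by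
  obtain ⟨hcont, hx, ht, hnn, heq⟩ := hu
  by_contra! hcon
  obtain ⟨t', ht', x', hx'⟩ := hcon
  set D : Set (EuclideanSpace ℝ (Fin n) × ℝ) := Metric.closedBall x₀ (R + 1) ×ˢ Icc a b with hD
  have hDc : IsCompact D := (isCompact_closedBall _ _).prod isCompact_Icc
  have hvc : ContinuousOn (fun q : EuclideanSpace ℝ (Fin n) × ℝ =>
      u q.1 q.2 - G q.2 (‖q.1 - x₀‖ ^ 2)) (univ ×ˢ Icc a b) := by
    refine (hcont.mono fun q hq => ha.le.trans hq.2.1).sub ?_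
    exact hGc.comp (f := fun q : EuclideanSpace ℝ (Fin n) × ℝ => (q.2, ‖q.1 - x₀‖ ^ 2))
      (by fun_prop) (fun q hq => ⟨hq.2, mem_univ _⟩)
  have hin : ∀ t ∈ Icc a b, ∀ x, u x t ≤ G t (‖x - x₀‖ ^ 2) → (x, t) ∈ D := by
    intro t htI x hxt
    refine ⟨?_, htI⟩
    have := hR t htI _ (by positivity) ((hnn x t (ha.le.trans htI.1)).trans hxt)
    rw [Metric.mem_closedBall, dist_eq_norm]
    nlinarith [sq_nonneg (‖x - x₀‖ - 1)]
  set K := D ∩ (fun q : EuclideanSpace ℝ (Fin n) × ℝ =>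
      u q.1 q.2 - G q.2 (‖q.1 - x₀‖ ^ 2)) ⁻¹' Iic 0 with hK
  have hKc : IsCompact K := by
    refine hDc.of_isClosed_subset ?_ inter_subset_left
    exact (hvc.mono (prod_mono_left (subset_univ _))).preimage_isClosed_of_isClosed
      hDc.isClosed isClosed_Iic
  have hKmem : ∀ t ∈ Icc a b, ∀ x, u x t ≤ G t (‖x - x₀‖ ^ 2) → (x, t) ∈ K :=
    fun t htI x hxt => ⟨hin t htI x hxt, by simpa using hxt⟩
  obtain ⟨⟨x, t⟩, ⟨⟨-, htI⟩, hle⟩, hmin⟩ :=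
    hKc.exists_isMinOn ⟨_, hKmem t' ht' x' hx'⟩ continuous_snd.continuousOn
  have hle' : u x t ≤ G t (‖x - x₀‖ ^ 2) := by simpa using hle
  have hat : a < t := by
    rcases htI.1.lt_or_eq with h | h
    · exact h
    · have h := h
      simp only at h
      subst h
      exact absurd hle' (not_le.2 (hinit x))
  simp only at htI
  have ht0 : 0 < t := ha.trans hat
  have hbefore : ∀ r ∈ Ico a t, ∀ y, 0 ≤ u y r - G r (‖y - x₀‖ ^ 2) := by
    intro r hr y
    by_contra! hneg
    have hm : t ≤ r := hmin (hKmem r ⟨hr.1, hr.2.le.trans htI.2⟩ y (by linarith))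
    exact absurd hr.2 (not_lt.2 hm)
  have hnow : ∀ y, G t (‖y - x₀‖ ^ 2) ≤ u y t := by
    intro y
    have hc : ContinuousOn (fun r => u y r - G r (‖y - x₀‖ ^ 2)) (Icc a b) :=
      hvc.comp (f := fun r : ℝ => (y, r)) (by fun_prop) (fun r hr => ⟨mem_univ _, hr⟩)
    have hc' := (hc t htI).mono_left (nhdsWithin_mono t
      (show Ioo a t ⊆ Icc a b from fun r hr => ⟨hr.1.le, hr.2.le.trans htI.2⟩))
    have : (nhdsWithin t (Ioo a t)).NeBot := right_nhdsWithin_Ioo_neBot hat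
    have := ge_of_tendsto hc' (by
      filter_upwards [self_mem_nhdsWithin] with r hr
      exact hbefore r ⟨hr.1.le, hr.2⟩ y)
    linarith
  have heqt : u x t = G t (‖x - x₀‖ ^ 2) := le_antisymm hle' (hnow x)
  have hlap := laplacian_ge_of_radial_touching (hx t ht0) (hG1 t htI) (hG2 t htI) hnow heqt
  have hut : HasDerivAt (u x) (deriv (u x) t) t :=
    ((((ht x).differentiableOn (by norm_num)) t ht0).differentiableAt
      (Ioi_mem_nhds ht0)).hasDerivAt
  have hd := deriv_nonpos_of_nonneg_left hat (hut.sub (hGt t htI (‖x - x₀‖ ^ 2)))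
    (by simp [heqt]) (fun r hr => hbefore r hr x)
  have hs := hsub t htI _ (sq_nonneg ‖x - x₀‖) (heqt ▸ hnn x t ht0.le)
  have he := heq x t ht0
  rw [heqt] at he
  linarith

theorem add_one_mul_le_rpow_add {p α φ : ℝ} (hα : 0 < α) (hαp : α * (p - 1) = 1) (hφ : 0 ≤ φ) :
    (α + 1) * φ ≤ φ ^ p + (α + 1) ^ (α + 1) := by
  rcases le_or_gt φ ((α + 1) ^ α) with h | h
  · have h1 : (α + 1) ^ (α + 1) = (α + 1) * (α + 1) ^ α := by
      rw [rpow_add_one (by positivity), mul_comm]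
    have h2 := rpow_nonneg hφ p
    rw [h1]
    nlinarith [mul_le_mul_of_nonneg_left h (by positivity : 0 ≤ α + 1)]
  · have hpos : 0 < φ := lt_of_le_of_lt (by positivity) h
    have hp : 0 < p - 1 := by
      by_contra! hp
      nlinarith
    have h1 : φ ^ p = φ ^ (p - 1) * φ := by
      rw [← rpow_add_one hpos.ne']; congr 1; ring
    have h2 : α + 1 ≤ φ ^ (p - 1) := by
      have := rpow_le_rpow (by positivity) h.le hp.le
      rwa [← rpow_mul (by positivity), hαp, rpow_one] at this
    have h3 : 0 ≤ (α + 1) ^ (α + 1) := by positivity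
    rw [h1]
    nlinarith

/-- Finite time blow-up for sufficiently large data. -/
theorem IsNonnegSolution.false_of_large {n : ℕ} {p : ℝ} {u : EuclideanSpace ℝ (Fin n) → ℝ → ℝ}
    (hu : IsNonnegSolution n p u) {α K T : ℝ} (hα : 0 < α) (hαp : α * (p - 1) = 1)
    (hK : 2 * n + (α + 1) ^ (α + 1) < K) (hT : 0 < T) (x₀ : EuclideanSpace ℝ (Fin n))
    (hinit : ∀ x, T ^ (-α) * (K - ‖x - x₀‖ ^ 2 / T) < u x T) : False := by
  have hK0 : 0 < K := lt_of_le_of_lt (by positivity) hK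
  have hlow : ∀ b ∈ Ico T (2 * T), (2 * T - b) ^ (-α) * K < u x₀ b := by
    intro b hb
    have hd : ∀ t ∈ Icc T b, 0 < 2 * T - t := fun t ht => by linarith [ht.2, hb.2]
    have hdt : ∀ t, HasDerivAt (fun t => 2 * T - t) (-1) t := fun t => by
      simpa using (hasDerivAt_id t).const_sub (2 * T)
    have := hu.radial_subsolution_lt (a := T) (b := b) (R := K * T) hT x₀
      (G := fun t s => (2 * T - t) ^ (-α) * K - (2 * T - t) ^ (-α - 1) * s)
      (G1 := fun t _ => -(2 * T - t) ^ (-α - 1)) (G2 := fun _ _ => 0)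
      (Gt := fun t s => α * (2 * T - t) ^ (-α - 1) * K
        - (α + 1) * (2 * T - t) ^ (-α - 1 - 1) * s)
      ?_ ?_ ?_ ?_ ?_ ?_ ?_ b ⟨hb.1, le_rfl⟩ x₀
    · simpa using this
    · have hc : ∀ r : ℝ, ContinuousOn (fun q : ℝ × ℝ => (2 * T - q.1) ^ r) (Icc T b ×ˢ univ) :=
        fun r => ContinuousOn.rpow_const (by fun_prop) fun q hq => Or.inl (hd q.1 hq.1).ne'
      exact ((hc _).mul continuousOn_const).sub ((hc _).mul continuousOn_snd)
    · intro t _ s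
      simpa using ((hasDerivAt_id s).const_mul ((2 * T - t) ^ (-α - 1))).const_sub
        ((2 * T - t) ^ (-α) * K)
    · intro t _ s
      exact hasDerivAt_const _ _
    · intro t ht s
      have h1 := ((hdt t).rpow_const (p := -α) (Or.inl (hd t ht).ne')).mul_const K
      have h2 := ((hdt t).rpow_const (p := -α - 1) (Or.inl (hd t ht).ne')).mul_const s
      exact (h1.sub h2).congr_deriv (by ring)
    · intro t ht s hs hG
      have hd' := hd t ht
      have h0 : 0 < (2 * T - t) ^ (-α - 1) := rpow_pos_of_pos hd' _
      have h1 : (2 * T - t) ^ (-α) = (2 * T - t) ^ (-α - 1) * (2 * T - t) := by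
        rw [← rpow_add_one hd'.ne']; congr 1; ring
      simp only [h1] at hG
      have h2 : 0 ≤ (2 * T - t) * K - s := by
        by_contra! h
        nlinarith
      nlinarith [ht.1]
    · intro t ht s hs hG
      have hd' := hd t ht
      set d := 2 * T - t with hdef
      have h0 : 0 < d ^ (-α - 1) := rpow_pos_of_pos hd' _
      have h0' : 0 < d ^ (-α) := rpow_pos_of_pos hd' _
      have h1 : d ^ (-α - 1) = d ^ (-α) / d := rpow_sub_one hd'.ne' _
      have h2 : d ^ (-α - 1 - 1) = d ^ (-α - 1) / d := rpow_sub_one hd'.ne' _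
      have hG' : d ^ (-α) * K - d ^ (-α - 1) * s = d ^ (-α) * (K - s / d) := by
        rw [h1]; ring
      rw [hG'] at hG ⊢
      have hφ : 0 ≤ K - s / d := nonneg_of_mul_nonneg_right hG h0'
      have h3 : (d ^ (-α)) ^ p = d ^ (-α - 1) := by
        rw [← rpow_mul hd'.le]; congr 1; linarith
      rw [mul_rpow h0'.le hφ, h3, h2]
      have h4 := add_one_mul_le_rpow_add hα hαp hφ
      have h5 : 0 < (K - s / d) ^ p - 2 * n - ((α + 1) * (K - s / d) - K) := by linarith
      have h6 := mul_pos h0 h5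
      have h7 : (α + 1) * (d ^ (-α - 1) / d) * s = (α + 1) * d ^ (-α - 1) * (s / d) := by ring
      rw [h7]
      linarith
    · intro x
      have h1 : (2 * T - T) = T := by ring
      have h2 := hinit x
      simp only [h1, rpow_sub_one hT.ne']
      calc _ = T ^ (-α) * (K - ‖x - x₀‖ ^ 2 / T) := by ring
        _ < _ := h2
  have hc : ContinuousWithinAt (u x₀) (Ico T (2 * T)) (2 * T) := by
    have h1 : ContinuousOn (u x₀) (Ici 0) :=
      hu.continuousOn.comp (f := fun t : ℝ => (x₀, t)) (by fun_prop) (fun t ht => ht)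
    exact (h1 (2 * T) (by simpa using hT.le)).mono fun t ht => hT.le.trans ht.1
  have hc2 : ContinuousWithinAt (fun t => (2 * T - t) ^ α * u x₀ t) (Ico T (2 * T)) (2 * T) := by
    refine ContinuousWithinAt.mul ?_ hc
    exact (Continuous.rpow_const (by fun_prop) fun _ => Or.inr hα.le).continuousWithinAt
  have hne : (nhdsWithin (2 * T) (Ico T (2 * T))).NeBot := by
    rw [← mem_closure_iff_nhdsWithin_neBot, closure_Ico (by linarith)]
    exact ⟨by linarith, le_rfl⟩
  have hge := ge_of_tendsto (b := K) hc2 (by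
    filter_upwards [self_mem_nhdsWithin] with t ht
    have hd : 0 < 2 * T - t := by linarith [ht.2]
    have h1 := mul_lt_mul_of_pos_left (hlow t ht) (rpow_pos_of_pos hd α)
    rw [← mul_assoc, ← rpow_add hd] at h1
    simpa using h1.le)
  simp [zero_rpow hα.ne'] at hge
  linarith

theorem exists_profile_coefficient {p : ℝ} (hp : 1 < p) {N : ℝ} (hN : 0 ≤ N) :
    ∃ a : ℝ, 0 < a ∧ ∀ η₀ η q : ℝ, 0 < η₀ → η₀ ≤ 1 → η₀ ≤ η → 0 ≤ q →
      0 ≤ η - a * η₀ ^ p * q ^ 2 →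
      a * η₀ ^ p - 2 * (a * η₀ ^ p) * q * (q - N) <
        exp (-(p - 1) * q / 4) * (η - a * η₀ ^ p * q ^ 2) ^ p := by
  set E := exp (-(p - 1) * (N + 1) / 4) with hE
  have hEpos : 0 < E := exp_pos _
  have h2p : 0 < (1 / 2 : ℝ) ^ p := by positivity
  set a := min (1 / (2 * (N + 1) ^ 2)) (E * (1 / 2) ^ p / (2 * (1 + N ^ 2))) with ha
  have ha0 : 0 < a := lt_min (by positivity) (by positivity)
  have ha1 : a * (N + 1) ^ 2 ≤ 1 / 2 := by
    have : a ≤ 1 / (2 * (N + 1) ^ 2) := min_le_left _ _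
    rw [le_div_iff₀ (by positivity)] at this
    linarith
  have ha2 : a * (1 + N ^ 2) < E * (1 / 2) ^ p := by
    have : a ≤ E * (1 / 2) ^ p / (2 * (1 + N ^ 2)) := min_le_right _ _
    rw [le_div_iff₀ (by positivity)] at this
    have : 0 < E * (1 / 2) ^ p := by positivity
    linarith
  refine ⟨a, ha0, fun η₀ η q hη₀ hη₁ hη hq hH => ?_⟩
  have hpow : 0 < η₀ ^ p := by positivity
  have hpow1 : η₀ ^ p ≤ η₀ := by
    simpa using rpow_le_rpow_of_exponent_ge hη₀ hη₁ hp.le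
  set b := a * η₀ ^ p with hb
  have hb0 : 0 < b := by positivity
  rcases le_or_gt (N + 1) q with h | h
  · have h1 : 1 ≤ q * (q - N) := by nlinarith
    have h2 : 0 ≤ exp (-(p - 1) * q / 4) * (η - b * q ^ 2) ^ p :=
      mul_nonneg (exp_pos _).le (rpow_nonneg hH _)
    nlinarith
  · have h1 : b * q ^ 2 ≤ η₀ / 2 := by
      have h3 : q ^ 2 ≤ (N + 1) ^ 2 := by gcongr
      calc b * q ^ 2 ≤ (a * η₀) * (N + 1) ^ 2 := by
            apply mul_le_mul _ h3 (by positivity) (by positivity)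
            exact mul_le_mul_of_nonneg_left hpow1 ha0.le
        _ = (a * (N + 1) ^ 2) * η₀ := by ring
        _ ≤ η₀ / 2 := by nlinarith
    have h2 : E * (1 / 2 * η₀) ^ p ≤ exp (-(p - 1) * q / 4) * (η - b * q ^ 2) ^ p := by
      apply mul_le_mul
      · rw [hE, exp_le_exp]
        nlinarith
      · exact rpow_le_rpow (by positivity) (by linarith) (by linarith)
      · positivity
      · positivity
    rw [mul_rpow (by norm_num) hη₀.le] at h2
    have h3 : b * (1 + N ^ 2) < E * ((1 / 2) ^ p * η₀ ^ p) := by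
      have := mul_lt_mul_of_pos_right ha2 hpow
      calc b * (1 + N ^ 2) = a * (1 + N ^ 2) * η₀ ^ p := by rw [hb]; ring
        _ < _ := this
        _ = _ := by ring
    have h4 : -(2 * q * (q - N)) ≤ N ^ 2 := by nlinarith [sq_nonneg (q - N), sq_nonneg q]
    nlinarith

/-- A Gaussian lower bound with logarithmically growing amplitude. -/
theorem IsNonnegSolution.gaussian_lower_bound {n : ℕ} {p : ℝ}
    {u : EuclideanSpace ℝ (Fin n) → ℝ → ℝ} (hu : IsNonnegSolution n p u) (hp : 1 < p) {α : ℝ}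
    (hα : 0 < α) (hαp : α * (p - 1) = 1) (hαn : (n : ℝ) / 2 ≤ α) {x₀ : EuclideanSpace ℝ (Fin n)}
    (hx₀ : 0 < u x₀ 0) :
    ∃ a η₀ b : ℝ, 0 < a ∧ 0 < η₀ ∧ 0 < b ∧ ∀ t, a ≤ t → ∀ x,
      t ^ (-α) * exp (-(‖x - x₀‖ ^ 2 / t) / 4) *
        (η₀ + b * log (t / a) - b * (‖x - x₀‖ ^ 2 / t) ^ 2) < u x t := by
  obtain ⟨A, hA, hprof⟩ := exists_profile_coefficient hp (N := 2 * (n + 2)) (by positivity)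
  obtain ⟨c, hc0, hc1, hcu⟩ : ∃ c : ℝ, 0 < c ∧ c ≤ 1 ∧ c < u x₀ 0 :=
    ⟨min 1 (u x₀ 0 / 2), lt_min one_pos (by linarith), min_le_left _ _,
      (min_le_right _ _).trans_lt (by linarith)⟩
  obtain ⟨ρ, hρ, hball⟩ : ∃ ρ > 0, ∀ x t, 0 ≤ t → ‖x - x₀‖ < ρ → t < ρ → c < u x t := by
    have h1 := (hu.continuousOn (x₀, 0) (by simp)).eventually (lt_mem_nhds hcu)
    obtain ⟨ρ, hρ, h⟩ := Metric.mem_nhdsWithin_iff.1 h1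
    refine ⟨ρ, hρ, fun x t ht hx htρ => @h (x, t) ⟨?_, ht⟩⟩
    rw [Metric.mem_ball, Prod.dist_eq, max_lt_iff, dist_eq_norm, dist_eq_norm]
    refine ⟨hx, ?_⟩
    simpa [abs_of_nonneg ht] using htρ
  obtain ⟨a, ha, ha1, haρ, haA⟩ :
      ∃ a : ℝ, 0 < a ∧ a ≤ 1 ∧ a < ρ ∧ a < A * c ^ (p - 1) * ρ ^ 4 := by
    have hM : 0 < A * c ^ (p - 1) * ρ ^ 4 := by positivity
    refine ⟨min 1 (min (ρ / 2) (A * c ^ (p - 1) * ρ ^ 4 / 2)),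
      lt_min one_pos (lt_min (by positivity) (by positivity)), min_le_left _ _, ?_, ?_⟩
    · exact ((min_le_right _ _).trans (min_le_left _ _)).trans_lt (by linarith)
    · exact ((min_le_right _ _).trans (min_le_right _ _)).trans_lt (by linarith)
  set η₀ := c * a ^ α with hη₀
  have hη₀pos : 0 < η₀ := by positivity
  have hη₀1 : η₀ ≤ 1 := mul_le_one₀ hc1 (by positivity) (rpow_le_one ha.le ha1 hα.le)
  set b := A * η₀ ^ p with hb
  have hb0 : 0 < b := by positivity
  refine ⟨a, η₀, b, ha, hη₀pos, hb0, fun T hT => ?_⟩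
  have hpos : ∀ t ∈ Icc a T, 0 < t := fun t ht => ha.trans_le ht.1
  have hlog0 : ∀ t ∈ Icc a T, 0 ≤ log (t / a) := fun t ht =>
    log_nonneg ((one_le_div ha).2 ht.1)
  refine hu.radial_subsolution_lt (a := a) (b := T)
    (R := 1 + (η₀ + b * log (T / a)) * T ^ 2 / b) ha x₀
    (G := fun t s => t ^ (-α) * exp (-(s / t) / 4) * (η₀ + b * log (t / a) - b * (s / t) ^ 2))
    (G1 := fun t s => t ^ (-α) * exp (-(s / t) / 4) *
      (-(1 / 4) * (η₀ + b * log (t / a) - b * (s / t) ^ 2) - 2 * b * (s / t)) / t)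
    (G2 := fun t s => t ^ (-α) * exp (-(s / t) / 4) *
      ((1 / 16) * (η₀ + b * log (t / a) - b * (s / t) ^ 2) + b * (s / t) - 2 * b) / t ^ 2)
    (Gt := fun t s => t ^ (-α) * exp (-(s / t) / 4) *
      ((s / t / 4 - α) * (η₀ + b * log (t / a) - b * (s / t) ^ 2) + b + 2 * b * (s / t) ^ 2) / t)
    ?_ ?_ ?_ ?_ ?_ ?_ ?_ T ⟨hT, le_rfl⟩
  · have h1 : ContinuousOn (fun q : ℝ × ℝ => q.1 ^ (-α)) (Icc a T ×ˢ univ) :=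
      ContinuousOn.rpow_const (by fun_prop) fun q hq => Or.inl (hpos q.1 hq.1).ne'
    have h2 : ContinuousOn (fun q : ℝ × ℝ => q.2 / q.1) (Icc a T ×ˢ univ) :=
      continuousOn_snd.div continuousOn_fst fun q hq => (hpos q.1 hq.1).ne'
    have h3 : ContinuousOn (fun q : ℝ × ℝ => log (q.1 / a)) (Icc a T ×ˢ univ) :=
      ContinuousOn.log (by fun_prop) fun q hq => (div_pos (hpos q.1 hq.1) ha).ne'
    fun_prop
  · intro t ht s
    have ht0 := hpos t ht
    have h1 : HasDerivAt (fun s : ℝ => s / t) (1 / t) s := (hasDerivAt_id s).div_const t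
    have h2 := ((h1.neg.div_const 4).exp.const_mul (t ^ (-α))).mul
      (((h1.pow 2).const_mul b).const_sub (η₀ + b * log (t / a)))
    refine h2.congr_deriv ?_
    simp
    field_simp
    ring
  · intro t ht s
    have ht0 := hpos t ht
    have h1 : HasDerivAt (fun s : ℝ => s / t) (1 / t) s := (hasDerivAt_id s).div_const t
    have h2 := (((h1.neg.div_const 4).exp.const_mul (t ^ (-α))).mul
      (((((h1.pow 2).const_mul b).const_sub (η₀ + b * log (t / a))).const_mul (-(1 / 4))).sub
        (h1.const_mul (2 * b)))).div_const t
    refine h2.congr_deriv ?_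
    simp
    field_simp
    ring
  · intro t ht s
    have ht0 := hpos t ht
    have h1 : HasDerivAt (fun t : ℝ => s / t) (-s / t ^ 2) t := by
      exact ((hasDerivAt_const t s).div (hasDerivAt_id t) ht0.ne').congr_deriv (by simp)
    have h2 : HasDerivAt (fun t : ℝ => t ^ (-α)) (-α * t ^ (-α - 1)) t :=
      hasDerivAt_rpow_const (Or.inl ht0.ne')
    have h3 : HasDerivAt (fun t : ℝ => log (t / a)) (1 / t) t := by
      refine (((hasDerivAt_id t).div_const a).log (div_pos ht0 ha).ne').congr_deriv ?_
      simp
      field_simp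
    have h4 := (h2.mul (h1.neg.div_const 4).exp).mul
      (((h3.const_mul b).const_add η₀).sub ((h1.pow 2).const_mul b))
    refine h4.congr_deriv ?_
    rw [rpow_sub_one ht0.ne']
    simp
    field_simp
    ring
  · intro t ht s hs hG
    have ht0 := hpos t ht
    have h1 : 0 ≤ η₀ + b * log (t / a) - b * (s / t) ^ 2 :=
      nonneg_of_mul_nonneg_right hG (by positivity)
    have h2 : log (t / a) ≤ log (T / a) :=
      log_le_log (div_pos ht0 ha) (by gcongr; exact ht.2)
    have h3 : b * (s / t) ^ 2 ≤ η₀ + b * log (T / a) := by nlinarith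
    have h4 : b * s ^ 2 ≤ (η₀ + b * log (T / a)) * T ^ 2 := by
      calc b * s ^ 2 = b * (s / t) ^ 2 * t ^ 2 := by field_simp
        _ ≤ (η₀ + b * log (T / a)) * T ^ 2 := by
          have := ht.2
          have h5 : 0 ≤ η₀ + b * log (T / a) := le_trans (by positivity) h3
          gcongr
    have h5 : s ^ 2 ≤ (η₀ + b * log (T / a)) * T ^ 2 / b := by
      rw [le_div_iff₀ hb0]; linarith
    nlinarith [sq_nonneg (s - 1)]
  · intro t ht s hs hG
    have ht0 := hpos t ht
    have hH : 0 ≤ η₀ + b * log (t / a) - b * (s / t) ^ 2 :=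
      nonneg_of_mul_nonneg_right hG (by positivity)
    have hq : 0 ≤ s / t := by positivity
    have hkey := hprof η₀ (η₀ + b * log (t / a)) (s / t) hη₀pos hη₀1
      (by nlinarith [hlog0 t ht]) hq hH
    rw [← hb] at hkey
    have hst : s = (s / t) * t := by field_simp
    set H := η₀ + b * log (t / a) - b * (s / t) ^ 2 with hHdef
    set q := s / t with hqdef
    have hta : 0 < t ^ (-α) := by positivity
    have htp : (t ^ (-α)) ^ p = t ^ (-α) / t := by
      rw [← rpow_mul ht0.le, ← rpow_sub_one ht0.ne']; congr 1; linarith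
    have hexp : exp (-q / 4) ^ p = exp (-q / 4) * exp (-(p - 1) * q / 4) := by
      rw [← exp_mul, ← exp_add]; congr 1; ring
    rw [mul_rpow (by positivity) hH, mul_rpow hta.le (exp_pos _).le, htp, hexp, hst]
    have hW : 0 < t ^ (-α) * exp (-q / 4) / t := by positivity
    have hnH : (n / 2 - α) * H ≤ 0 := mul_nonpos_of_nonpos_of_nonneg (by linarith) hH
    have hmain : (q / 4 - α) * H + b + 2 * b * q ^ 2 <
        4 * q * ((1 / 16) * H + b * q - 2 * b) + 2 * n * (-(1 / 4) * H - 2 * b * q) +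
          exp (-(p - 1) * q / 4) * H ^ p := by
      nlinarith
    have := mul_lt_mul_of_pos_left hmain hW
    calc _ = t ^ (-α) * exp (-q / 4) / t * ((q / 4 - α) * H + b + 2 * b * q ^ 2) := by ring
      _ < _ := this
      _ = _ := by field_simp
  · intro x
    have haa : log (a / a) = 0 := by rw [div_self ha.ne', log_one]
    simp only [haa, mul_zero, add_zero]
    have hW : 0 < a ^ (-α) * exp (-(‖x - x₀‖ ^ 2 / a) / 4) := by positivity
    rcases lt_or_ge ‖x - x₀‖ ρ with h | h
    · refine lt_of_le_of_lt ?_ (hball x a ha.le h haρ)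
      have he : exp (-(‖x - x₀‖ ^ 2 / a) / 4) ≤ 1 := by
        rw [exp_le_one_iff]
        have : 0 ≤ ‖x - x₀‖ ^ 2 / a := by positivity
        linarith
      calc _ ≤ a ^ (-α) * exp (-(‖x - x₀‖ ^ 2 / a) / 4) * η₀ := by
            apply mul_le_mul_of_nonneg_left _ hW.le
            have : 0 ≤ b * (‖x - x₀‖ ^ 2 / a) ^ 2 := by positivity
            linarith
        _ ≤ a ^ (-α) * 1 * η₀ := by gcongr
        _ = c := by
          rw [hη₀, rpow_neg ha.le]
          field_simp
    · refine lt_of_lt_of_le ?_ (hu.nonneg x a ha.le)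
      refine mul_neg_of_pos_of_neg hW ?_
      have h1 : ρ ^ 4 ≤ ‖x - x₀‖ ^ 4 := by gcongr
      have h2 : η₀ ^ p = η₀ * (c ^ (p - 1) * a) := by
        have : η₀ ^ p = η₀ ^ (p - 1) * η₀ := by
          rw [← rpow_add_one hη₀pos.ne']; congr 1; ring
        rw [this, hη₀, mul_rpow hc0.le (by positivity), ← rpow_mul ha.le, hαp, rpow_one]
        ring
      have h3 : b * (‖x - x₀‖ ^ 2 / a) ^ 2 = η₀ * (A * c ^ (p - 1) * ‖x - x₀‖ ^ 4 / a) := by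
        rw [hb, h2]
        field_simp
      have h4 : 1 < A * c ^ (p - 1) * ‖x - x₀‖ ^ 4 / a := by
        rw [one_lt_div ha]
        exact haA.trans_le (by gcongr)
      rw [h3]
      nlinarith

/-- Euclidean specialization of part (a) of the main theorem: for `1 < p ≤ 1 + 2/n`, the
semilinear heat equation `Δu - ∂ₜ u + u^p = 0` on `ℝⁿ × (0,∞)` has no nonnegative classical
solution with nonnegative, not identically zero initial data. -/
theorem no_nonneg_solution_subcritical (n : ℕ) (hn : 1 ≤ n) (p : ℝ)
    (hp1 : 1 < p) (hp2 : p ≤ 1 + 2 / (n : ℝ)) :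
    ¬ ∃ u : EuclideanSpace ℝ (Fin n) → ℝ → ℝ,
      -- continuity on ℝⁿ × [0,∞)
      ContinuousOn (fun q : EuclideanSpace ℝ (Fin n) × ℝ => u q.1 q.2) {q | 0 ≤ q.2} ∧
      -- twice continuously differentiable in x on ℝⁿ × (0,∞)
      (∀ t : ℝ, 0 < t → ContDiff ℝ 2 (fun x => u x t)) ∧
      -- once continuously differentiable in t on ℝⁿ × (0,∞)
      (∀ x : EuclideanSpace ℝ (Fin n), ContDiffOn ℝ 1 (u x) (Set.Ioi (0 : ℝ))) ∧
      -- nonnegativity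
      (∀ x : EuclideanSpace ℝ (Fin n), ∀ t : ℝ, 0 ≤ t → 0 ≤ u x t) ∧
      -- the equation Δu - ∂ₜu + u^p = 0 on ℝⁿ × (0,∞)
      (∀ x : EuclideanSpace ℝ (Fin n), ∀ t : ℝ, 0 < t →
        laplacian (fun y => u y t) x - deriv (u x) t + u x t ^ p = 0) ∧
      -- the initial value u₀ = u(·,0) is not identically zero
      (∃ x : EuclideanSpace ℝ (Fin n), u x 0 ≠ 0) := by
  rintro ⟨u, h1, h2, h3, h4, h5, x₀, hx₀⟩
  have hu : IsNonnegSolution n p u := ⟨h1, h2, h3, h4, h5⟩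
  have hp : 0 < p - 1 := by linarith
  have hn0 : (0 : ℝ) < n := by exact_mod_cast hn
  obtain ⟨α, hα, hαp, hαn⟩ : ∃ α : ℝ, 0 < α ∧ α * (p - 1) = 1 ∧ (n : ℝ) / 2 ≤ α := by
    refine ⟨1 / (p - 1), by positivity, by field_simp, ?_⟩
    have h6 : p - 1 ≤ 2 / n := by linarith
    rw [le_div_iff₀ hn0] at h6
    rw [le_div_iff₀ hp]
    linarith
  obtain ⟨a, η₀, b, ha, hη₀, hb, hlow⟩ := hu.gaussian_lower_bound hp1 hα hαp hαn
    (lt_of_le_of_ne (h4 x₀ 0 le_rfl) hx₀.symm)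
  obtain ⟨K, hK⟩ := exists_gt (2 * n + (α + 1) ^ (α + 1))
  have hK0 : 0 < K := lt_of_le_of_lt (by positivity) hK
  set L := (K * exp (K / 4) + b * K ^ 2) / b with hL
  have hL0 : 0 ≤ L := by positivity
  set T := a * exp L with hT
  have haT : a ≤ T := le_mul_of_one_le_right ha.le (one_le_exp hL0)
  have hT0 : 0 < T := by positivity
  refine hu.false_of_large hα hαp hK hT0 x₀ fun x => ?_
  have hTα : 0 < T ^ (-α) := by positivity
  have hq : 0 ≤ ‖x - x₀‖ ^ 2 / T := by positivity
  have hlowx := hlow T haT x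
  set q := ‖x - x₀‖ ^ 2 / T with hqdef
  rcases le_or_gt q K with h | h
  · refine lt_of_le_of_lt ?_ hlowx
    have hlog : b * log (T / a) = K * exp (K / 4) + b * K ^ 2 := by
      rw [hT, mul_div_cancel_left₀ _ ha.ne', log_exp, hL]
      field_simp
    rw [hlog, mul_assoc]
    refine mul_le_mul_of_nonneg_left ?_ hTα.le
    have hqK : b * q ^ 2 ≤ b * K ^ 2 := by gcongr
    have he : exp (-K / 4) ≤ exp (-q / 4) := by
      rw [exp_le_exp]; linarith
    calc K - q ≤ K := by linarith
      _ = exp (-K / 4) * (K * exp (K / 4)) := by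
        rw [mul_left_comm, ← exp_add]
        ring_nf
        simp
      _ ≤ exp (-q / 4) * (η₀ + (K * exp (K / 4) + b * K ^ 2) - b * q ^ 2) := by
        apply mul_le_mul he (by linarith) (by positivity) (exp_pos _).le
  · exact lt_of_lt_of_le (mul_neg_of_pos_of_neg hTα (by linarith)) (h4 x T hT0.le)
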